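/- Let n, m ≥ 1 and let Γ be a metric-compatible (0,1)-soliton on the trivial bundle ℝⁿ × ℝᵐ whose curvature satisfies |F(x)| ≤ 3/8 for every x ∈ ℝⁿ. Then Γ is flat, i.e. F_{ij}(x) = 0 for all indices i, j and all x ∈ ℝⁿ. -/

import Mathlib

open MeasureTheory Real Filter Matrix
open scoped ENNReal

noncomputable section

namespace YM

variable {n m : ℕ}

/-- A connection on the trivial bundle `ℝⁿ × ℝᵐ`, given by its coefficient
matrices `Γ₁(x), …, Γₙ(x)`. -/
abbrev Conn (n m : ℕ) :=
  (Fin n → ℝ) → Fin n → Matrix (Fin m) (Fin m) ℝ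

/-- Entrywise `i`-th partial derivative of a matrix-valued map on `ℝⁿ`. -/
def pder (i : Fin n) (A : (Fin n → ℝ) → Matrix (Fin m) (Fin m) ℝ)
    (x : Fin n → ℝ) : Matrix (Fin m) (Fin m) ℝ :=
  Matrix.of fun a b => fderiv ℝ (fun y => A y a b) x (Pi.single i 1)

/-- Smoothness (entrywise) of a matrix-valued map on `ℝⁿ`. -/
def SmoothMat (A : (Fin n → ℝ) → Matrix (Fin m) (Fin m) ℝ) : Prop :=
  ∀ a b, ContDiff ℝ (⊤ : ℕ∞) fun y => A y a b

/-- Smoothness of a connection. -/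
def Smooth (Γ : Conn n m) : Prop :=
  ∀ i, SmoothMat fun x => Γ x i

/-- Matrix commutator. -/
def comm (A B : Matrix (Fin m) (Fin m) ℝ) : Matrix (Fin m) (Fin m) ℝ :=
  A * B - B * A

/-- Curvature `F_{ij} = ∂ᵢΓⱼ − ∂ⱼΓᵢ + [Γᵢ, Γⱼ]`. -/
def curv (Γ : Conn n m) (i j : Fin n) (x : Fin n → ℝ) :
    Matrix (Fin m) (Fin m) ℝ :=
  pder i (fun y => Γ y j) x - pder j (fun y => Γ y i) x + comm (Γ x i) (Γ x j)

/-- Covariant derivative `∇ᵢA = ∂ᵢA + [Γᵢ, A]`. -/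
def covDer (Γ : Conn n m) (i : Fin n)
    (A : (Fin n → ℝ) → Matrix (Fin m) (Fin m) ℝ) (x : Fin n → ℝ) :
    Matrix (Fin m) (Fin m) ℝ :=
  pder i A x + comm (Γ x i) (A x)

/-- `(D*F)ₖ = −Σᵢ ∇ᵢF_{ik}`. -/
def dstarF (Γ : Conn n m) (k : Fin n) (x : Fin n → ℝ) :
    Matrix (Fin m) (Fin m) ℝ :=
  - ∑ i, covDer Γ i (fun y => curv Γ i k y) x

/-- Squared Frobenius norm of a matrix. -/
def frobSq (A : Matrix (Fin m) (Fin m) ℝ) : ℝ := ∑ a, ∑ b, (A a b) ^ 2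

/-- Frobenius norm of a matrix. -/
def frobNorm (A : Matrix (Fin m) (Fin m) ℝ) : ℝ := Real.sqrt (frobSq A)

/-- Frobenius inner product `⟨A, B⟩ = tr(A Bᵀ)`. -/
def frobInner (A B : Matrix (Fin m) (Fin m) ℝ) : ℝ := ∑ a, ∑ b, A a b * B a b

/-- `|F(x)|² = Σ_{i,j} ‖F_{ij}(x)‖²` (Frobenius norms). -/
def normSqF (Γ : Conn n m) (x : Fin n → ℝ) : ℝ :=
  ∑ i, ∑ j, frobSq (curv Γ i j x)

/-- `|F(x)|`. -/
def normF (Γ : Conn n m) (x : Fin n → ℝ) : ℝ := Real.sqrt (normSqF Γ x)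

/-- Euclidean norm on `ℝⁿ`. -/
def enorm (x : Fin n → ℝ) : ℝ := Real.sqrt (∑ i, x i ^ 2)

/-- Metric compatibility: all coefficient matrices are skew-symmetric. -/
def MetricCompat (Γ : Conn n m) : Prop :=
  ∀ x i, (Γ x i)ᵀ = -(Γ x i)

/-- `(x₀,t₀)`-soliton: `Σᵢ ∇ᵢF_{ik} = (1/(2t₀)) Σᵢ (x−x₀)ᵢ F_{ik}`. -/
def IsSolitonAt (Γ : Conn n m) (x₀ : Fin n → ℝ) (t₀ : ℝ) : Prop :=
  ∀ (x : Fin n → ℝ) (k : Fin n),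
    ∑ i, covDer Γ i (fun y => curv Γ i k y) x
      = (1 / (2 * t₀)) • ∑ i, (x i - x₀ i) • curv Γ i k x

/-- `(0,1)`-soliton. -/
def IsSoliton (Γ : Conn n m) : Prop := IsSolitonAt Γ 0 1

/-- The `ℱ`-functional
`ℱ_{x₀,t₀}(Γ) = t₀² (4πt₀)^{−n/2} ∫ |F|² e^{−|x−x₀|²/(4t₀)}`. -/
def Ffunc (Γ : Conn n m) (x₀ : Fin n → ℝ) (t₀ : ℝ) : ℝ :=
  t₀ ^ 2 * (4 * π * t₀) ^ (-(n : ℝ) / 2) *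
    ∫ x : Fin n → ℝ,
      normSqF Γ x * Real.exp (-(∑ i, (x i - x₀ i) ^ 2) / (4 * t₀))

/-- The entropy `λ(Γ) = sup_{x₀, t₀>0} ℱ_{x₀,t₀}(Γ)`, valued in `[0,∞]`. -/
def entropy (Γ : Conn n m) : ℝ≥0∞ :=
  ⨆ (x₀ : Fin n → ℝ) (t₀ : ℝ) (_ : 0 < t₀), ENNReal.ofReal (Ffunc Γ x₀ t₀)

/-- Polynomial curvature growth: `|F(x)| ≤ p(|x|)`. -/
def PolyCurvGrowth (Γ : Conn n m) : Prop :=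
  ∃ p : Polynomial ℝ, ∀ x, normF Γ x ≤ p.eval (enorm x)

/-- Polynomial curvature growth to order two. -/
def PolyCurvGrowth2 (Γ : Conn n m) : Prop :=
  ∃ p : Polynomial ℝ, ∀ x,
    normF Γ x
      + (∑ i, ∑ j, ∑ k, frobNorm (covDer Γ i (fun y => curv Γ j k y) x))
      + (∑ i, ∑ j, ∑ k, ∑ l,
          frobNorm (covDer Γ i
            (fun y => covDer Γ j (fun z => curv Γ k l z) y) x))
      ≤ p.eval (enorm x)

/-- Cylindrical: some nonzero constant vector `V` satisfies `V ⌟ F ≡ 0`. -/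
def Cylindrical (Γ : Conn n m) : Prop :=
  ∃ V : Fin n → ℝ, V ≠ 0 ∧
    ∀ (x : Fin n → ℝ) (k : Fin n), ∑ i, V i • curv Γ i k x = 0

/-- `(DB)_{ij} = ∇ᵢBⱼ − ∇ⱼBᵢ`. -/
def Dop (Γ B : Conn n m) (i j : Fin n) (x : Fin n → ℝ) :
    Matrix (Fin m) (Fin m) ℝ :=
  covDer Γ i (fun y => B y j) x - covDer Γ j (fun y => B y i) x

/-- The second variation operator
`(L_{x₀,t₀}B)ₖ = −Σᵢ∇ᵢ(DB)_{ik} + (1/(2t₀))Σᵢ(x−x₀)ᵢ(DB)_{ik} + Σᵢ[Bᵢ,F_{ik}]`. -/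
def Lop (Γ B : Conn n m) (x₀ : Fin n → ℝ) (t₀ : ℝ) (k : Fin n)
    (x : Fin n → ℝ) : Matrix (Fin m) (Fin m) ℝ :=
  (- ∑ i, covDer Γ i (fun y => Dop Γ B i k y) x)
    + (1 / (2 * t₀)) • ∑ i, (x i - x₀ i) • Dop Γ B i k x
    + ∑ i, comm (B x i) (curv Γ i k x)

/-- The Gaussian weight `G(x) = (4π)^{−n/2} e^{−|x|²/4}`. -/
def gaussG (n : ℕ) (x : Fin n → ℝ) : ℝ :=
  (4 * π) ^ (-(n : ℝ) / 2) * Real.exp (-(∑ i, x i ^ 2) / 4)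

/-- The second variation form `Q(σ,V,B)` of a `(0,1)`-soliton. -/
def Q (Γ : Conn n m) (σ : ℝ) (V : Fin n → ℝ) (B : Conn n m) : ℝ :=
  -4 * σ ^ 2 * (∫ x : Fin n → ℝ, (∑ k, frobSq (dstarF Γ k x)) * gaussG n x)
    - 2 * (∫ x : Fin n → ℝ,
        (∑ k, frobSq (∑ i, V i • curv Γ i k x)) * gaussG n x)
    + 4 * (∫ x : Fin n → ℝ,
        (∑ k, frobInner (B x k) (Lop Γ B 0 1 k x)) * gaussG n x)
    - 4 * (∫ x : Fin n → ℝ,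
        (∑ k, frobInner (B x k)
          (∑ i, (σ * x i + V i) • curv Γ i k x)) * gaussG n x)

/-- Skew-symmetric-matrix-valued 1-form. -/
def SkewVals (B : Conn n m) : Prop := ∀ x i, (B x i)ᵀ = -(B x i)

/-- `ℱ`-instability. -/
def FUnstable (Γ : Conn n m) : Prop :=
  ∃ B : Conn n m, Smooth B ∧ HasCompactSupport B ∧ SkewVals B ∧
    ∀ (σ : ℝ) (V : Fin n → ℝ), Q Γ σ V B < 0

/-- Joint smoothness (entrywise) of a one-parameter family of connections on a
time set `S`. -/
def SmoothFamilyOn (Γt : ℝ → Conn n m) (S : Set ℝ) : Prop :=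
  ∀ (k : Fin n) (a b : Fin m),
    ContDiffOn ℝ (⊤ : ℕ∞) (fun p : ℝ × (Fin n → ℝ) => Γt p.1 p.2 k a b)
      (S ×ˢ (Set.univ : Set (Fin n → ℝ)))

/-- Yang–Mills flow: `∂ₜ(Γ_t)ₖ = Σᵢ ∇ᵢ(F_t)_{ik}` on a time set `S`. -/
def YMFlowOn (Γt : ℝ → Conn n m) (S : Set ℝ) : Prop :=
  ∀ t ∈ S, ∀ (x : Fin n → ℝ) (k : Fin n) (a b : Fin m),
    HasDerivWithinAt (fun t' => Γt t' x k a b)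
      ((∑ i, covDer (Γt t) i (fun y => curv (Γt t) i k y) x) a b) S t

/-- Locally uniform in time polynomial curvature growth to order two. -/
def PolyCurvGrowth2On (Γt : ℝ → Conn n m) (S : Set ℝ) : Prop :=
  ∀ J : Set ℝ, IsCompact J → J ⊆ S →
    ∃ p : Polynomial ℝ, ∀ t ∈ J, ∀ x,
      normF (Γt t) x
        + (∑ i, ∑ j, ∑ k,
            frobNorm (covDer (Γt t) i (fun y => curv (Γt t) j k y) x))
        + (∑ i, ∑ j, ∑ k, ∑ l,
            frobNorm (covDer (Γt t) i
              (fun y => covDer (Γt t) j (fun z => curv (Γt t) k l z) y) x))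
        ≤ p.eval (enorm x)

end YM

namespace YM

/-! ### Calculus of matrix-valued maps -/

section calculus

variable {n m : ℕ} {A B C : (Fin n → ℝ) → Matrix (Fin m) (Fin m) ℝ}

/-- Scalar partial derivative. -/
def pd (i : Fin n) (f : (Fin n → ℝ) → ℝ) (x : Fin n → ℝ) : ℝ :=
  fderiv ℝ f x (Pi.single i 1)

lemma SmoothMat.diff (hA : SmoothMat A) (a b : Fin m) (x : Fin n → ℝ) :
    DifferentiableAt ℝ (fun y => A y a b) x :=
  ((hA a b).differentiable (by simp)) x

lemma SmoothMat.add (hA : SmoothMat A) (hB : SmoothMat B) :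
    SmoothMat (fun x => A x + B x) := fun a b => by
  simpa using (hA a b).add (hB a b)

lemma SmoothMat.sub (hA : SmoothMat A) (hB : SmoothMat B) :
    SmoothMat (fun x => A x - B x) := fun a b => by
  simpa using (hA a b).sub (hB a b)

lemma SmoothMat.neg (hA : SmoothMat A) :
    SmoothMat (fun x => - A x) := fun a b => by
  simpa using (hA a b).neg

lemma SmoothMat.mul (hA : SmoothMat A) (hB : SmoothMat B) :
    SmoothMat (fun x => A x * B x) := fun a b => by
  simp only [Matrix.mul_apply]
  exact ContDiff.sum fun c _ => (hA a c).mul (hB c b)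

lemma SmoothMat.comm (hA : SmoothMat A) (hB : SmoothMat B) :
    SmoothMat (fun x => comm (A x) (B x)) := (hA.mul hB).sub (hB.mul hA)

lemma SmoothMat.pder (hA : SmoothMat A) (i : Fin n) :
    SmoothMat (fun x => pder i A x) := fun a b => by
  simp only [YM.pder, Matrix.of_apply]
  exact ((hA a b).fderiv_right (m := (⊤ : ℕ∞)) (by simp)).clm_apply contDiff_const

lemma SmoothMat.coord (hA : SmoothMat A) (i : Fin n) :
    SmoothMat (fun x => x i • A x) := fun a b => by
  simp only [Matrix.smul_apply, smul_eq_mul]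
  exact (contDiff_apply ℝ ℝ i).mul (hA a b)

lemma pder_add (hA : SmoothMat A) (hB : SmoothMat B) (i : Fin n) (x : Fin n → ℝ) :
    pder i (fun y => A y + B y) x = pder i A x + pder i B x := by
  ext a b
  simp only [pder, Matrix.of_apply, Matrix.add_apply]
  rw [fderiv_fun_add (hA.diff a b x) (hB.diff a b x)]; simp

lemma pder_sub (hA : SmoothMat A) (hB : SmoothMat B) (i : Fin n) (x : Fin n → ℝ) :
    pder i (fun y => A y - B y) x = pder i A x - pder i B x := by
  ext a b
  simp only [pder, Matrix.of_apply, Matrix.sub_apply]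
  rw [fderiv_fun_sub (hA.diff a b x) (hB.diff a b x)]; simp

lemma pder_neg (i : Fin n) (x : Fin n → ℝ) :
    pder i (fun y => - A y) x = - pder i A x := by
  ext a b
  simp only [pder, Matrix.of_apply, Matrix.neg_apply]
  rw [fderiv_fun_neg]; simp

lemma pder_mul (hA : SmoothMat A) (hB : SmoothMat B) (i : Fin n) (x : Fin n → ℝ) :
    pder i (fun y => A y * B y) x = pder i A x * B x + A x * pder i B x := by
  ext a b
  simp only [pder, Matrix.of_apply, Matrix.add_apply, Matrix.mul_apply]
  rw [fderiv_fun_sum (fun c _ => (hA.diff a c x).fun_mul (hB.diff c b x))]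
  rw [← Finset.sum_add_distrib]
  simp only [_root_.sum_apply]
  refine Finset.sum_congr rfl fun c _ => ?_
  rw [fderiv_fun_mul (hA.diff a c x) (hB.diff c b x)]
  simp; ring

lemma pder_comm (hA : SmoothMat A) (hB : SmoothMat B) (i : Fin n) (x : Fin n → ℝ) :
    pder i (fun y => comm (A y) (B y)) x
      = comm (pder i A x) (B x) + comm (A x) (pder i B x) := by
  simp only [comm]
  rw [pder_sub (hA.mul hB) (hB.mul hA), pder_mul hA hB, pder_mul hB hA]
  abel

lemma pder_sum {ι : Type*} (s : Finset ι) (A : ι → (Fin n → ℝ) → Matrix (Fin m) (Fin m) ℝ)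
    (hA : ∀ l, SmoothMat (A l)) (i : Fin n) (x : Fin n → ℝ) :
    pder i (fun y => ∑ l ∈ s, A l y) x = ∑ l ∈ s, pder i (A l) x := by
  ext a b
  simp only [pder, Matrix.of_apply, Matrix.sum_apply]
  rw [fderiv_fun_sum (fun c _ => (hA c).diff a b x)]
  simp

lemma pder_coord (hA : SmoothMat A) (i l : Fin n) (x : Fin n → ℝ) :
    pder i (fun y => y l • A y) x = (if l = i then A x else 0) + x l • pder i A x := by
  ext a b
  simp only [pder, Matrix.of_apply, Matrix.add_apply, Matrix.smul_apply, smul_eq_mul]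
  rw [fderiv_fun_mul (differentiableAt_apply l x) (hA.diff a b x)]
  have : fderiv ℝ (fun y : Fin n → ℝ => y l) x = ContinuousLinearMap.proj l :=
    (ContinuousLinearMap.proj (R := ℝ) (φ := fun _ : Fin n => ℝ) l).fderiv
  rw [this]
  by_cases h : l = i
  · subst h; simp; ring
  · simp [h]

lemma pder_smul (hA : SmoothMat A) (c : ℝ) (i : Fin n) (x : Fin n → ℝ) :
    pder i (fun y => c • A y) x = c • pder i A x := by
  ext a b
  simp only [pder, Matrix.of_apply, Matrix.smul_apply, smul_eq_mul]
  rw [fderiv_const_mul (hA.diff a b x)]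
  simp

lemma pder_swap (hA : SmoothMat A) (i j : Fin n) (x : Fin n → ℝ) :
    pder i (fun y => pder j A y) x = pder j (fun y => pder i A y) x := by
  ext a b
  simp only [pder, Matrix.of_apply]
  have hs : IsSymmSndFDerivAt ℝ (fun y => A y a b) x :=
    (hA a b).contDiffAt.isSymmSndFDerivAt (by simpa using WithTop.coe_le_coe.2 (le_top : (2 : ℕ∞) ≤ ⊤))
  have hd : DifferentiableAt ℝ (fderiv ℝ (fun y => A y a b)) x :=
    (((hA a b).fderiv_right (m := (⊤ : ℕ∞)) (by simp)).differentiable (by simp)) x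
  rw [fderiv_clm_apply hd (by fun_prop), fderiv_clm_apply hd (by fun_prop)]
  simp
  exact hs _ _

end calculus

section cov

variable {n m : ℕ} {Γ : Conn n m} {A B : (Fin n → ℝ) → Matrix (Fin m) (Fin m) ℝ}

lemma SmoothMat.covDer (hΓ : Smooth Γ) (hA : SmoothMat A) (i : Fin n) :
    SmoothMat (fun x => covDer Γ i A x) :=
  (hA.pder i).add ((hΓ i).comm hA)

lemma smooth_curv (hΓ : Smooth Γ) (i j : Fin n) : SmoothMat (fun x => curv Γ i j x) :=
  (((hΓ j).pder i).sub ((hΓ i).pder j)).add ((hΓ i).comm (hΓ j))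

lemma covDer_commute (hΓ : Smooth Γ) (hA : SmoothMat A) (i j : Fin n) (x : Fin n → ℝ) :
    covDer Γ i (fun y => covDer Γ j A y) x
      = covDer Γ j (fun y => covDer Γ i A y) x + comm (curv Γ i j x) (A x) := by
  have h1 : ∀ i j : Fin n, covDer Γ i (fun y => covDer Γ j A y) x
      = pder i (fun y => pder j A y) x + (comm (pder i (fun y => Γ y j) x) (A x)
        + comm (Γ x j) (pder i A x)) + comm (Γ x i) (pder j A x + comm (Γ x j) (A x)) := by
    intro i j
    conv_lhs => unfold covDer
    rw [pder_add (hA.pder j) ((hΓ j).comm hA), pder_comm (hΓ j) hA]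
  rw [h1, h1, pder_swap hA i j]
  simp only [comm, curv]
  noncomm_ring

lemma curv_swap (i j : Fin n) (x : Fin n → ℝ) : curv Γ i j x = - curv Γ j i x := by
  simp only [curv, comm]; noncomm_ring

lemma covDer_curv (hΓ : Smooth Γ) (i j k : Fin n) (x : Fin n → ℝ) :
    covDer Γ i (fun y => curv Γ j k y) x
      = pder i (fun y => pder j (fun z => Γ z k) y) x
        - pder i (fun y => pder k (fun z => Γ z j) y) x
        + (comm (pder i (fun y => Γ y j) x) (Γ x k) + comm (Γ x j) (pder i (fun y => Γ y k) x))
        + comm (Γ x i) (curv Γ j k x) := by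
  unfold covDer
  congr 1
  unfold curv
  rw [pder_add (((hΓ k).pder j).sub ((hΓ j).pder k)) ((hΓ j).comm (hΓ k)),
    pder_sub ((hΓ k).pder j) ((hΓ j).pder k), pder_comm (hΓ j) (hΓ k)]

lemma bianchi (hΓ : Smooth Γ) (i j k : Fin n) (x : Fin n → ℝ) :
    covDer Γ i (fun y => curv Γ j k y) x
      = covDer Γ j (fun y => curv Γ i k y) x - covDer Γ k (fun y => curv Γ i j y) x := by
  rw [covDer_curv hΓ, covDer_curv hΓ, covDer_curv hΓ,
    pder_swap (hΓ k) i j, pder_swap (hΓ j) i k, pder_swap (hΓ i) j k]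
  simp only [comm, curv]
  noncomm_ring

lemma covDer_sub (hA : SmoothMat A) (hB : SmoothMat B) (i : Fin n) (x : Fin n → ℝ) :
    covDer Γ i (fun y => A y - B y) x = covDer Γ i A x - covDer Γ i B x := by
  simp only [covDer, pder_sub hA hB, comm]; noncomm_ring

lemma covDer_sum {ι : Type*} (s : Finset ι) (A : ι → (Fin n → ℝ) → Matrix (Fin m) (Fin m) ℝ)
    (hA : ∀ l, SmoothMat (A l)) (i : Fin n) (x : Fin n → ℝ) :
    covDer Γ i (fun y => ∑ l ∈ s, A l y) x = ∑ l ∈ s, covDer Γ i (A l) x := by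
  simp only [covDer, pder_sum s A hA, comm, Finset.sum_add_distrib, Finset.sum_sub_distrib,
    Finset.mul_sum, Finset.sum_mul]

lemma covDer_coord (hA : SmoothMat A) (i l : Fin n) (x : Fin n → ℝ) :
    covDer Γ i (fun y => y l • A y) x
      = (if l = i then A x else 0) + x l • covDer Γ i A x := by
  simp only [covDer, pder_coord hA, comm, smul_add, smul_sub, mul_smul_comm, smul_mul_assoc]
  abel

lemma covDer_smul (hA : SmoothMat A) (c : ℝ) (i : Fin n) (x : Fin n → ℝ) :
    covDer Γ i (fun y => c • A y) x = c • covDer Γ i A x := by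
  simp only [covDer, pder_smul hA, comm, smul_add, smul_sub, mul_smul_comm, smul_mul_assoc]

/-- Covariant derivative of the soliton equation. -/
lemma covDer_soliton (hΓ : Smooth Γ) (hs : IsSoliton Γ) (j k : Fin n) (x : Fin n → ℝ) :
    ∑ i, covDer Γ j (fun y => covDer Γ i (fun z => curv Γ i k z) y) x
      = (1 / 2 : ℝ) • (curv Γ j k x + ∑ i, x i • covDer Γ j (fun y => curv Γ i k y) x) := by
  rw [← covDer_sum Finset.univ (fun i y => covDer Γ i (fun z => curv Γ i k z) y)
    (fun i => SmoothMat.covDer hΓ (smooth_curv hΓ i k) i)]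
  have h : (fun y => ∑ i, covDer Γ i (fun z => curv Γ i k z) y)
      = fun y => (1 / 2 : ℝ) • ∑ i, y i • curv Γ i k y := by
    funext y
    have := hs y k
    simpa using this
  have hsm : ∀ i, SmoothMat (fun y : Fin n → ℝ => y i • curv Γ i k y) :=
    fun i => (smooth_curv hΓ i k).coord i
  have hsm' : SmoothMat (fun y : Fin n → ℝ => ∑ i, y i • curv Γ i k y) := fun a b => by
    simp only [Matrix.sum_apply]
    exact ContDiff.sum fun i _ => hsm i a b
  rw [h, covDer_smul hsm', covDer_sum Finset.univ (fun i y => y i • curv Γ i k y) hsm]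
  congr 1
  simp only [covDer_coord (smooth_curv hΓ _ k), Finset.sum_add_distrib]
  simp

lemma comm_neg_right (X Y : Matrix (Fin m) (Fin m) ℝ) : comm X (-Y) = - comm X Y := by
  simp only [comm]; noncomm_ring

lemma comm_anti (X Y : Matrix (Fin m) (Fin m) ℝ) : comm X Y = - comm Y X := by
  simp only [comm]; noncomm_ring

/-- The Weitzenböck-type identity for the curvature of a soliton. -/
lemma laplace_curv (hΓ : Smooth Γ) (hs : IsSoliton Γ) (j k : Fin n) (x : Fin n → ℝ) :
    ∑ i, covDer Γ i (fun y => covDer Γ i (fun z => curv Γ j k z) y) x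
      = curv Γ j k x + (1 / 2 : ℝ) • ∑ i, x i • covDer Γ i (fun y => curv Γ j k y) x
        + (2 : ℝ) • ∑ i, comm (curv Γ i j x) (curv Γ i k x) := by
  have h1 : ∀ i, covDer Γ i (fun y => covDer Γ i (fun z => curv Γ j k z) y) x
      = covDer Γ j (fun y => covDer Γ i (fun z => curv Γ i k z) y) x
        - covDer Γ k (fun y => covDer Γ i (fun z => curv Γ i j z) y) x
        + (2 : ℝ) • comm (curv Γ i j x) (curv Γ i k x) := by
    intro i
    have e : (fun y => covDer Γ i (fun z => curv Γ j k z) y)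
        = fun y => covDer Γ j (fun z => curv Γ i k z) y - covDer Γ k (fun z => curv Γ i j z) y :=
      funext fun y => bianchi hΓ i j k y
    rw [e, covDer_sub (SmoothMat.covDer hΓ (smooth_curv hΓ i k) j)
      (SmoothMat.covDer hΓ (smooth_curv hΓ i j) k),
      covDer_commute hΓ (smooth_curv hΓ i k) i j, covDer_commute hΓ (smooth_curv hΓ i j) i k,
      comm_anti (curv Γ i k x) (curv Γ i j x), two_smul]
    abel
  simp only [h1, Finset.sum_add_distrib, Finset.sum_sub_distrib]
  rw [covDer_soliton hΓ hs, covDer_soliton hΓ hs, ← Finset.smul_sum]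
  congr 1
  have h2 : ∑ i, x i • covDer Γ i (fun y => curv Γ j k y) x
      = ∑ i, x i • covDer Γ j (fun y => curv Γ i k y) x
        - ∑ i, x i • covDer Γ k (fun y => curv Γ i j y) x := by
    rw [← Finset.sum_sub_distrib]
    exact Finset.sum_congr rfl fun i _ => by rw [bianchi hΓ i j k x, smul_sub]
  rw [h2, curv_swap k j]
  module

end cov

end YM

namespace YM

/-! ### The commutator inequality for skew matrices -/

section algebra

variable {m : ℕ}

lemma sw12 (g : Fin m → Fin m → Fin m → Fin m → ℝ) :
    ∑ a, ∑ b, ∑ c, ∑ d, g a b c d = ∑ a, ∑ b, ∑ c, ∑ d, g b a c d := Finset.sum_comm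

lemma sw23 (g : Fin m → Fin m → Fin m → Fin m → ℝ) :
    ∑ a, ∑ b, ∑ c, ∑ d, g a b c d = ∑ a, ∑ b, ∑ c, ∑ d, g a c b d :=
  Finset.sum_congr rfl fun _ _ => Finset.sum_comm

lemma sw34 (g : Fin m → Fin m → Fin m → Fin m → ℝ) :
    ∑ a, ∑ b, ∑ c, ∑ d, g a b c d = ∑ a, ∑ b, ∑ c, ∑ d, g a b d c :=
  Finset.sum_congr rfl fun _ _ => Finset.sum_congr rfl fun _ _ => Finset.sum_comm

lemma sum4_congr {g h : Fin m → Fin m → Fin m → Fin m → ℝ} (H : ∀ a b c d, g a b c d = h a b c d) :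
    ∑ a, ∑ b, ∑ c, ∑ d, g a b c d = ∑ a, ∑ b, ∑ c, ∑ d, h a b c d := by
  simp only [H]

/-- The (unnormalised) coefficients of `A ∧ A`. -/
def wedge (A : Matrix (Fin m) (Fin m) ℝ) (a b c d : Fin m) : ℝ :=
  A a b * A c d - A a c * A b d + A a d * A b c

/-- The coefficients of `A * Aᵀ`. -/
def gram (A : Matrix (Fin m) (Fin m) ℝ) (a b : Fin m) : ℝ := ∑ c, A a c * A b c

/-- `tr (A B A B)` for skew matrices. -/
def rterm (A B : Matrix (Fin m) (Fin m) ℝ) : ℝ :=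
  ∑ a, ∑ b, ∑ c, ∑ d, A a b * A c d * (B a c * B b d)

lemma sum_wedge (A B : Matrix (Fin m) (Fin m) ℝ) (hA : ∀ a b, A a b = - A b a)
    (hB : ∀ a b, B a b = - B b a) :
    ∑ a, ∑ b, ∑ c, ∑ d, wedge A a b c d * wedge B a b c d
      = 3 * (frobInner A B) ^ 2 - 6 * rterm A B := by
  have hs : ∑ a, ∑ b, ∑ c, ∑ d, (A a b * A c d) * (B a b * B c d) = (frobInner A B) ^ 2 := by
    simp only [frobInner, sq, Finset.sum_mul, Finset.mul_sum]
    exact sum4_congr fun a b c d => by ring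
  have hr : rterm A B = ∑ a, ∑ b, ∑ c, ∑ d, A a b * A c d * (B a c * B b d) := rfl
  have h3 : ∑ a, ∑ b, ∑ c, ∑ d, (A a b * A c d) * (B a d * B b c) = - rterm A B := by
    rw [hr, sw34]
    simp only [← Finset.sum_neg_distrib]
    exact sum4_congr fun a b c d => by rw [hA d c]; ring
  have h4 : ∑ a, ∑ b, ∑ c, ∑ d, (A a c * A b d) * (B a b * B c d) = rterm A B := by
    rw [hr, sw23]
  have h5 : ∑ a, ∑ b, ∑ c, ∑ d, (A a c * A b d) * (B a c * B b d) = (frobInner A B) ^ 2 := by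
    rw [← hs, sw23]
  have h6 : ∑ a, ∑ b, ∑ c, ∑ d, (A a c * A b d) * (B a d * B b c) = rterm A B := by
    rw [← neg_neg (rterm A B), ← h3, sw23]
    simp only [← Finset.sum_neg_distrib]
    exact sum4_congr fun a b c d => by rw [hB c b]; ring
  have h7 : ∑ a, ∑ b, ∑ c, ∑ d, (A a d * A b c) * (B a b * B c d) = - rterm A B := by
    rw [hr, sw34, sw23]
    simp only [← Finset.sum_neg_distrib]
    exact sum4_congr fun a b c d => by rw [hB d b]; ring
  have h8 : ∑ a, ∑ b, ∑ c, ∑ d, (A a d * A b c) * (B a c * B b d) = rterm A B := by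
    rw [← h6, sw34]
  have h9 : ∑ a, ∑ b, ∑ c, ∑ d, (A a d * A b c) * (B a d * B b c) = (frobInner A B) ^ 2 := by
    rw [← h5, sw34]
  have e : ∑ a, ∑ b, ∑ c, ∑ d, wedge A a b c d * wedge B a b c d =
      ∑ a, ∑ b, ∑ c, ∑ d, (A a b * A c d) * (B a b * B c d)
      - ∑ a, ∑ b, ∑ c, ∑ d, (A a b * A c d) * (B a c * B b d)
      + ∑ a, ∑ b, ∑ c, ∑ d, (A a b * A c d) * (B a d * B b c)
      - ∑ a, ∑ b, ∑ c, ∑ d, (A a c * A b d) * (B a b * B c d)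
      + ∑ a, ∑ b, ∑ c, ∑ d, (A a c * A b d) * (B a c * B b d)
      - ∑ a, ∑ b, ∑ c, ∑ d, (A a c * A b d) * (B a d * B b c)
      + ∑ a, ∑ b, ∑ c, ∑ d, (A a d * A b c) * (B a b * B c d)
      - ∑ a, ∑ b, ∑ c, ∑ d, (A a d * A b c) * (B a c * B b d)
      + ∑ a, ∑ b, ∑ c, ∑ d, (A a d * A b c) * (B a d * B b c) := by
    simp only [← Finset.sum_add_distrib, ← Finset.sum_sub_distrib]
    exact sum4_congr fun a b c d => by simp only [wedge]; ring
  rw [e, hs, h3, h4, h5, h6, h7, h8, h9, ← hr]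
  ring

lemma frobSq_comm (A B : Matrix (Fin m) (Fin m) ℝ) (hA : ∀ a b, A a b = - A b a)
    (hB : ∀ a b, B a b = - B b a) :
    frobSq (comm A B) = 2 * (∑ a, ∑ b, gram A a b * gram B a b) - 2 * rterm A B := by
  have hq : ∑ a, ∑ b, ∑ c, ∑ d, (A a c * B c b) * (A a d * B d b)
      = ∑ a, ∑ b, gram A a b * gram B a b := by
    rw [sw23, sw34, sw12, sw23]
    simp only [gram, Finset.sum_mul, Finset.mul_sum]
    rw [sw34]
    exact sum4_congr fun a b c d => by
      rw [hA d a, hA d b]; ring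
  have hq' : ∑ a, ∑ b, ∑ c, ∑ d, (B a c * A c b) * (B a d * A d b)
      = ∑ a, ∑ b, gram A a b * gram B a b := by
    rw [← hq, sw12]
    exact sum4_congr fun a b c d => by
      rw [hA c a, hA d a, hB b c, hB b d]; ring
  have hr : ∑ a, ∑ b, ∑ c, ∑ d, (A a c * B c b) * (B a d * A d b) = rterm A B := by
    rw [sw23, sw34, rterm]
    exact sum4_congr fun a b c d => by ring
  have e : frobSq (comm A B) = ∑ a, ∑ b, ∑ c, ∑ d, (A a c * B c b) * (A a d * B d b)
      + ∑ a, ∑ b, ∑ c, ∑ d, (B a c * A c b) * (B a d * A d b)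
      - 2 * ∑ a, ∑ b, ∑ c, ∑ d, (A a c * B c b) * (B a d * A d b) := by
    simp only [Finset.mul_sum (a := (2:ℝ)), ← Finset.sum_add_distrib, ← Finset.sum_sub_distrib]
    simp only [frobSq, comm, Matrix.sub_apply, Matrix.mul_apply]
    refine Finset.sum_congr rfl fun a _ => Finset.sum_congr rfl fun b _ => ?_
    have : ∀ u v : ℝ, (u - v) ^ 2 = u * u + v * v - 2 * (u * v) := fun u v => by ring
    rw [this, Finset.sum_mul_sum, Finset.sum_mul_sum, Finset.sum_mul_sum]
    simp only [Finset.mul_sum (a := (2:ℝ)), ← Finset.sum_add_distrib, ← Finset.sum_sub_distrib]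
  rw [e, hq, hq', hr]
  ring

lemma frobSq_comm_eq (A B : Matrix (Fin m) (Fin m) ℝ) (hA : ∀ a b, A a b = - A b a)
    (hB : ∀ a b, B a b = - B b a) :
    frobSq (comm A B) = 2 * (∑ a, ∑ b, gram A a b * gram B a b)
      + (1 / 3) * (∑ a, ∑ b, ∑ c, ∑ d, wedge A a b c d * wedge B a b c d)
      - (frobInner A B) ^ 2 := by
  rw [frobSq_comm A B hA hB, sum_wedge A B hA hB]; ring

lemma frobInner_self (A : Matrix (Fin m) (Fin m) ℝ) : frobInner A A = frobSq A := by
  simp only [frobInner, frobSq, sq]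

lemma frobSq_nonneg (A : Matrix (Fin m) (Fin m) ℝ) : 0 ≤ frobSq A :=
  Finset.sum_nonneg fun _ _ => Finset.sum_nonneg fun _ _ => sq_nonneg _

lemma frobSq_eq_zero {A : Matrix (Fin m) (Fin m) ℝ} (h : frobSq A = 0) : A = 0 := by
  ext a b
  have h1 := (Finset.sum_eq_zero_iff_of_nonneg
    (fun a _ => Finset.sum_nonneg fun b _ => sq_nonneg (A a b))).1 h a (Finset.mem_univ a)
  have h2 := (Finset.sum_eq_zero_iff_of_nonneg
    (fun b _ => sq_nonneg (A a b))).1 h1 b (Finset.mem_univ b)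
  simpa using h2

lemma gram_wedge_self (A : Matrix (Fin m) (Fin m) ℝ) (hA : ∀ a b, A a b = - A b a) :
    2 * (∑ a, ∑ b, gram A a b * gram A a b)
      + (1 / 3) * (∑ a, ∑ b, ∑ c, ∑ d, wedge A a b c d * wedge A a b c d) = (frobSq A) ^ 2 := by
  have h := frobSq_comm_eq A A hA hA
  have h0 : comm A A = 0 := by simp [comm]
  rw [h0, frobInner_self] at h
  have h1 : frobSq (0 : Matrix (Fin m) (Fin m) ℝ) = 0 := by simp [frobSq]
  linarith

/-- For skew matrices, `‖[A,B]‖ ≤ ‖A‖ ‖B‖`. -/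
lemma frobSq_comm_le (A B : Matrix (Fin m) (Fin m) ℝ) (hA : ∀ a b, A a b = - A b a)
    (hB : ∀ a b, B a b = - B b a) :
    frobSq (comm A B) ≤ frobSq A * frobSq B := by
  rcases (frobSq_nonneg A).eq_or_lt' with h0 | hApos
  · rw [frobSq_eq_zero h0]; simp [comm, frobSq]
  rcases (frobSq_nonneg B).eq_or_lt' with h0 | hBpos
  · rw [frobSq_eq_zero h0]; simp [comm, frobSq]
  have hAA := gram_wedge_self A hA
  have hBB := gram_wedge_self B hB
  have hAB := frobSq_comm_eq A B hA hB
  set α := frobSq A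
  set β := frobSq B
  have k1 : 0 ≤ ∑ a, ∑ b, (β * gram A a b - α * gram B a b) ^ 2 :=
    Finset.sum_nonneg fun _ _ => Finset.sum_nonneg fun _ _ => sq_nonneg _
  have k2 : 0 ≤ ∑ a, ∑ b, ∑ c, ∑ d, (β * wedge A a b c d - α * wedge B a b c d) ^ 2 :=
    Finset.sum_nonneg fun _ _ => Finset.sum_nonneg fun _ _ =>
      Finset.sum_nonneg fun _ _ => Finset.sum_nonneg fun _ _ => sq_nonneg _
  have e1 : ∑ a, ∑ b, (β * gram A a b - α * gram B a b) ^ 2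
      = β ^ 2 * (∑ a, ∑ b, gram A a b * gram A a b)
        - 2 * (α * β) * (∑ a, ∑ b, gram A a b * gram B a b)
        + α ^ 2 * (∑ a, ∑ b, gram B a b * gram B a b) := by
    simp only [Finset.mul_sum, ← Finset.sum_add_distrib, ← Finset.sum_sub_distrib]
    refine Finset.sum_congr rfl fun a _ => Finset.sum_congr rfl fun b _ => ?_
    ring
  have e2 : ∑ a, ∑ b, ∑ c, ∑ d, (β * wedge A a b c d - α * wedge B a b c d) ^ 2
      = β ^ 2 * (∑ a, ∑ b, ∑ c, ∑ d, wedge A a b c d * wedge A a b c d)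
        - 2 * (α * β) * (∑ a, ∑ b, ∑ c, ∑ d, wedge A a b c d * wedge B a b c d)
        + α ^ 2 * (∑ a, ∑ b, ∑ c, ∑ d, wedge B a b c d * wedge B a b c d) := by
    simp only [Finset.mul_sum, ← Finset.sum_add_distrib, ← Finset.sum_sub_distrib]
    exact sum4_congr fun a b c d => by ring
  rw [e1] at k1
  rw [e2] at k2
  have key : (α * β) * (frobSq (comm A B) + (frobInner A B) ^ 2) ≤ (α * β) * (α * β) := by
    rw [hAB]
    linear_combination k1 + (1 / 6) * k2 + (1 / 2) * β ^ 2 * hAA + (1 / 2) * α ^ 2 * hBB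
  have := le_of_mul_le_mul_left key (by positivity)
  nlinarith [sq_nonneg (frobInner A B)]

lemma sum2_cauchy {ι κ : Type*} [Fintype ι] [Fintype κ] (f g : ι → κ → ℝ) :
    (∑ a, ∑ b, f a b * g a b) ^ 2 ≤ (∑ a, ∑ b, f a b ^ 2) * ∑ a, ∑ b, g a b ^ 2 := by
  have := Finset.sum_mul_sq_le_sq_mul_sq (Finset.univ : Finset (ι × κ))
    (fun p => f p.1 p.2) (fun p => g p.1 p.2)
  simpa only [Fintype.sum_prod_type] using this

lemma frobNorm_sq (A : Matrix (Fin m) (Fin m) ℝ) : frobNorm A ^ 2 = frobSq A :=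
  Real.sq_sqrt (frobSq_nonneg A)

lemma frobNorm_nonneg (A : Matrix (Fin m) (Fin m) ℝ) : 0 ≤ frobNorm A := Real.sqrt_nonneg _

lemma abs_frobInner_comm_le (A B C : Matrix (Fin m) (Fin m) ℝ) (hA : ∀ a b, A a b = - A b a)
    (hB : ∀ a b, B a b = - B b a) :
    |frobInner (comm A B) C| ≤ frobNorm A * frobNorm B * frobNorm C := by
  apply abs_le_of_sq_le_sq
  · calc (frobInner (comm A B) C) ^ 2 ≤ frobSq (comm A B) * frobSq C := sum2_cauchy _ _
      _ ≤ (frobSq A * frobSq B) * frobSq C :=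
        mul_le_mul_of_nonneg_right (frobSq_comm_le A B hA hB) (frobSq_nonneg C)
      _ = (frobNorm A * frobNorm B * frobNorm C) ^ 2 := by
        rw [mul_pow, mul_pow, frobNorm_sq, frobNorm_sq, frobNorm_sq]
  · have := frobNorm_nonneg A
    have := frobNorm_nonneg B
    have := frobNorm_nonneg C
    positivity

lemma triple_sum_le {n : ℕ} (N : Fin n → Fin n → ℝ) :
    |∑ j, ∑ k, (∑ i, N i j * N i k) * N j k| ≤ (Real.sqrt (∑ i, ∑ j, N i j ^ 2)) ^ 3 := by
  have h0 : 0 ≤ ∑ i, ∑ j, N i j ^ 2 :=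
    Finset.sum_nonneg fun _ _ => Finset.sum_nonneg fun _ _ => sq_nonneg _
  apply abs_le_of_sq_le_sq _ (by positivity)
  have h1 : ∑ j, ∑ k, (∑ i, N i j * N i k) ^ 2
      ≤ (∑ i, ∑ j, N i j ^ 2) * (∑ i, ∑ j, N i j ^ 2) := by
    rw [Finset.sum_comm (f := fun i j => N i j ^ 2), Finset.sum_mul_sum]
    exact Finset.sum_le_sum fun j _ => Finset.sum_le_sum fun k _ =>
      Finset.sum_mul_sq_le_sq_mul_sq _ _ _
  calc _ ≤ _ := sum2_cauchy _ _
    _ ≤ ((∑ i, ∑ j, N i j ^ 2) * (∑ i, ∑ j, N i j ^ 2)) * (∑ i, ∑ j, N i j ^ 2) :=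
      mul_le_mul_of_nonneg_right h1 h0
    _ = ((Real.sqrt (∑ i, ∑ j, N i j ^ 2)) ^ 2) ^ 3 := by rw [Real.sq_sqrt h0]; ring
    _ = _ := by ring

end algebra

end YM

namespace YM

/-! ### Maximum principle -/

section maxprinciple

variable {n : ℕ}

/-- One-variable second derivative necessary condition at a global maximum. -/
lemma second_deriv_nonpos {h h' : ℝ → ℝ} {c : ℝ} (hd : ∀ t, HasDerivAt h (h' t) t)
    (hd2 : HasDerivAt h' c 0) (hmax : ∀ t, h t ≤ h 0) : h' 0 = 0 ∧ c ≤ 0 := by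
  have hloc : IsLocalMax h 0 := Filter.Eventually.of_forall hmax
  have h1 : h' 0 = 0 := hloc.hasDerivAt_eq_zero (hd 0)
  refine ⟨h1, ?_⟩
  by_contra hc
  push Not at hc
  have e : deriv h = h' := funext fun t => (hd t).deriv
  have hmin : IsLocalMin h 0 := by
    apply isLocalMin_of_deriv_deriv_pos
    · rw [e, hd2.deriv]; exact hc
    · rw [e, h1]
    · exact (hd 0).continuousAt
  have hconst : h =ᶠ[nhds 0] fun _ => h 0 := by
    filter_upwards [hmin] with t ht using le_antisymm (hmax t) ht
  have h2 : deriv h =ᶠ[nhds 0] deriv fun _ => h 0 := hconst.deriv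
  have h3 : h' =ᶠ[nhds 0] fun _ => (0:ℝ) := by
    rw [e] at h2
    simpa using h2
  have h4 := h3.deriv_eq
  rw [hd2.deriv] at h4
  simp at h4
  exact absurd h4 hc.ne'

lemma hasDerivAt_line {f : (Fin n → ℝ) → ℝ} (hf : Differentiable ℝ f) (i : Fin n)
    (x : Fin n → ℝ) (t : ℝ) :
    HasDerivAt (fun s : ℝ => f (x + s • Pi.single i (1:ℝ))) (pd i f (x + t • Pi.single i (1:ℝ))) t := by
  have hl : HasDerivAt (fun s : ℝ => x + s • (Pi.single i (1:ℝ) : Fin n → ℝ))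
      (Pi.single i (1:ℝ)) t := by
    simpa using ((hasDerivAt_id t).smul_const (Pi.single i (1:ℝ) : Fin n → ℝ)).const_add x
  exact (hf _).hasFDerivAt.comp_hasDerivAt t hl

lemma contDiff_pd {f : (Fin n → ℝ) → ℝ} (hf : ContDiff ℝ (⊤ : ℕ∞) f) (i : Fin n) :
    ContDiff ℝ (⊤ : ℕ∞) (fun x => pd i f x) :=
  (hf.fderiv_right (m := (⊤ : ℕ∞)) (by simp)).clm_apply contDiff_const

lemma pd_sumsq (i : Fin n) (x : Fin n → ℝ) :
    pd i (fun y : Fin n → ℝ => ∑ l, y l ^ 2) x = 2 * x i := by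
  unfold pd
  have : HasFDerivAt (fun y : Fin n → ℝ => ∑ l, y l ^ 2)
      (∑ l, (2 * x l) • (ContinuousLinearMap.proj l : (Fin n → ℝ) →L[ℝ] ℝ)) x := by
    apply HasFDerivAt.fun_sum
    intro l _
    have h := ((ContinuousLinearMap.proj (R := ℝ) (φ := fun _ : Fin n => ℝ) l).hasFDerivAt
      (x := x)).pow 2
    simpa using h
  rw [this.fderiv]
  simp [Pi.single_apply]

theorem max_principle {f : (Fin n → ℝ) → ℝ} (hf : ContDiff ℝ (⊤ : ℕ∞) f) {C c : ℝ} (hc : 0 < c)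
    (hC : ∀ x, f x ≤ C)
    (hL : ∀ x, c * f x ≤ ∑ i, pd i (fun y => pd i f y) x - (1 / 2) * ∑ i, x i * pd i f x)
    (y : Fin n → ℝ) : f y ≤ 0 := by
  have hfd : Differentiable ℝ f := hf.differentiable (by simp)
  have hpd : ∀ i, Differentiable ℝ (fun x => pd i f x) :=
    fun i => (contDiff_pd hf i).differentiable (by simp)
  have hq : ContDiff ℝ (⊤ : ℕ∞) (fun y : Fin n → ℝ => ∑ l, y l ^ 2) :=
    ContDiff.sum fun l _ => (contDiff_apply ℝ ℝ l).pow 2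
  have hqd : Differentiable ℝ (fun y : Fin n → ℝ => ∑ l, y l ^ 2) := hq.differentiable (by simp)
  have hqn : ∀ x : Fin n → ℝ, 0 ≤ ∑ l, x l ^ 2 := fun x => Finset.sum_nonneg fun _ _ => sq_nonneg _
  -- main estimate
  have main : ∀ ε : ℝ, 0 < ε → f y ≤ ε * (∑ l, y l ^ 2 + 2 * n / c) := by
    intro ε hε
    obtain ⟨x₀, hx₀⟩ : ∃ x₀, ∀ x, f x - ε * ∑ l, x l ^ 2 ≤ f x₀ - ε * ∑ l, x₀ l ^ 2 := by
      have hcont : Continuous (fun x : Fin n → ℝ => f x - ε * ∑ l, x l ^ 2) :=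
        hf.continuous.sub (continuous_const.mul hq.continuous)
      set D := (C - f 0) / ε with hD
      have hD0 : 0 ≤ D := div_nonneg (sub_nonneg.2 (hC 0)) hε.le
      obtain ⟨x₀, _, hx₀⟩ := (isCompact_closedBall (0 : Fin n → ℝ) (D + 1)).exists_isMaxOn
        ⟨0, by simp; linarith⟩ hcont.continuousOn
      refine ⟨x₀, fun x => ?_⟩
      by_cases hx : x ∈ Metric.closedBall (0 : Fin n → ℝ) (D + 1)
      · exact hx₀ hx
      · have h0 : f 0 - ε * ∑ l, (0 : Fin n → ℝ) l ^ 2 ≤ f x₀ - ε * ∑ l, x₀ l ^ 2 :=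
          hx₀ (show (0 : Fin n → ℝ) ∈ _ by simp; linarith)
        simp at h0 hx
        have hnx : ‖x‖ ^ 2 ≤ ∑ l, x l ^ 2 := by
          have : ‖x‖ ≤ Real.sqrt (∑ l, x l ^ 2) := by
            refine (pi_norm_le_iff_of_nonneg (Real.sqrt_nonneg _)).2 fun l => ?_
            apply Real.le_sqrt_of_sq_le
            rw [Real.norm_eq_abs, sq_abs]
            exact Finset.single_le_sum (f := fun l => x l ^ 2) (fun _ _ => sq_nonneg _)
              (Finset.mem_univ l)
          calc ‖x‖ ^ 2 ≤ (Real.sqrt (∑ l, x l ^ 2)) ^ 2 := by gcongr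
            _ = _ := Real.sq_sqrt (hqn x)
        have h2 : D ≤ ∑ l, x l ^ 2 := by nlinarith
        have h3 : C - f 0 ≤ ε * ∑ l, x l ^ 2 := by
          have := mul_le_mul_of_nonneg_left h2 hε.le
          rwa [hD, mul_div_cancel₀ _ hε.ne'] at this
        have := hC x
        linarith
    have hi : ∀ i, pd i f x₀ = 2 * ε * x₀ i ∧ pd i (fun y => pd i f y) x₀ ≤ 2 * ε := by
      intro i
      have k := second_deriv_nonpos
        (h := fun t : ℝ => f (x₀ + t • Pi.single i (1:ℝ))
          - ε * ∑ l, (x₀ + t • (Pi.single i (1:ℝ) : Fin n → ℝ)) l ^ 2)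
        (h' := fun t : ℝ => pd i f (x₀ + t • Pi.single i (1:ℝ))
          - ε * (2 * (x₀ i + t)))
        (c := pd i (fun y => pd i f y) x₀ - ε * (2 * 1))
        (by
          intro t
          have k1 := hasDerivAt_line hfd i x₀ t
          have k2 := hasDerivAt_line hqd i x₀ t
          rw [pd_sumsq] at k2
          have k3 := k1.fun_sub (k2.const_mul ε)
          simpa using k3)
        (by
          have k1 := hasDerivAt_line (hpd i) i x₀ 0
          have k2 : HasDerivAt (fun t : ℝ => ε * (2 * (x₀ i + t))) (ε * (2 * 1)) 0 :=
            (((hasDerivAt_id (0:ℝ)).const_add (x₀ i)).const_mul 2).const_mul ε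
          have k3 := k1.fun_sub k2
          simpa using k3)
        (by
          intro t
          have k1 := hx₀ (x₀ + t • Pi.single i (1:ℝ))
          simp only [zero_smul, add_zero]
          exact k1)
      simp at k
      constructor <;> linarith [k.1, k.2]
    have h1 := hL x₀
    have h2 : ∑ i, pd i (fun y => pd i f y) x₀ ≤ ∑ _i : Fin n, 2 * ε :=
      Finset.sum_le_sum fun i _ => (hi i).2
    have h3 : ∑ i, x₀ i * pd i f x₀ = 2 * ε * ∑ i, x₀ i ^ 2 := by
      rw [Finset.mul_sum]
      exact Finset.sum_congr rfl fun i _ => by rw [(hi i).1]; ring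
    simp at h2
    have h4 : c * f x₀ ≤ n * (2 * ε) := by
      rw [h3] at h1
      have : 0 ≤ ε * ∑ i, x₀ i ^ 2 := mul_nonneg hε.le (hqn x₀)
      linarith
    have h5 : f x₀ ≤ ε * (2 * n / c) := by
      rw [← mul_div_assoc, le_div_iff₀ hc]; linarith
    have h6 := hx₀ y
    have : 0 ≤ ε * ∑ i, x₀ i ^ 2 := mul_nonneg hε.le (hqn x₀)
    linarith
  set K := ∑ l, y l ^ 2 + 2 * n / c with hK
  have hK0 : 0 ≤ K := add_nonneg (hqn y) (by positivity)
  by_contra hpos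
  push Not at hpos
  have := main (f y / (2 * (K + 1))) (by positivity)
  have h2 : f y / (2 * (K + 1)) * K = f y * (K / (2 * (K + 1))) := by ring
  have h3 : K / (2 * (K + 1)) < 1 := by rw [div_lt_one (by positivity)]; linarith
  nlinarith

end maxprinciple

end YM

namespace YM

section final

variable {n m : ℕ} {Γ : Conn n m} {A B : (Fin n → ℝ) → Matrix (Fin m) (Fin m) ℝ}

lemma skew_apply {X : Matrix (Fin m) (Fin m) ℝ} (h : Xᵀ = -X) (a b : Fin m) :
    X a b = - X b a := by
  have := congrFun (congrFun h b) a
  simpa [Matrix.transpose_apply] using this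

lemma curv_skew (hmc : MetricCompat Γ) (i j : Fin n) (x : Fin n → ℝ) (a b : Fin m) :
    curv Γ i j x a b = - curv Γ i j x b a := by
  have hp : ∀ i j : Fin n, pder i (fun y => Γ y j) x a b = - pder i (fun y => Γ y j) x b a := by
    intro i j
    simp only [pder, Matrix.of_apply]
    have : (fun y => Γ y j a b) = fun y => - Γ y j b a :=
      funext fun y => skew_apply (hmc y j) a b
    rw [this, fderiv_fun_neg]; simp
  have hc : comm (Γ x i) (Γ x j) a b = - comm (Γ x i) (Γ x j) b a := by
    apply skew_apply
    simp only [comm, Matrix.transpose_sub, Matrix.transpose_mul, hmc x i, hmc x j]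
    noncomm_ring
  simp only [curv, Matrix.add_apply, Matrix.sub_apply]
  rw [hp i j, hp j i, hc]; ring

lemma frobInner_comm_skew {G X Y : Matrix (Fin m) (Fin m) ℝ} (hG : ∀ a b, G a b = - G b a) :
    frobInner (comm G X) Y + frobInner X (comm G Y) = 0 := by
  have e1 : ∑ a, ∑ b, ∑ c, G a c * X c b * Y a b = - ∑ a, ∑ b, ∑ c, X a b * (G a c * Y c b) := by
    have : ∀ g : Fin m → Fin m → Fin m → ℝ, ∑ a, ∑ b, ∑ c, g a b c = ∑ a, ∑ b, ∑ c, g c b a := by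
      intro g
      rw [Finset.sum_comm]
      conv_rhs => rw [Finset.sum_comm]
      exact Finset.sum_congr rfl fun _ _ => Finset.sum_comm
    rw [this]
    simp only [← Finset.sum_neg_distrib]
    refine Finset.sum_congr rfl fun a _ => Finset.sum_congr rfl fun b _ =>
      Finset.sum_congr rfl fun c _ => ?_
    rw [hG c a]; ring
  have e2 : ∑ a, ∑ b, ∑ c, X a c * G c b * Y a b = - ∑ a, ∑ b, ∑ c, X a b * (Y a c * G c b) := by
    simp only [← Finset.sum_neg_distrib]
    refine Finset.sum_congr rfl fun a _ => ?_
    rw [Finset.sum_comm]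
    refine Finset.sum_congr rfl fun b _ => Finset.sum_congr rfl fun c _ => ?_
    rw [hG b c]; ring
  simp only [frobInner, comm, Matrix.sub_apply, Matrix.mul_apply, sub_mul, mul_sub,
    Finset.sum_mul, Finset.mul_sum, Finset.sum_sub_distrib]
  rw [e1, e2]; ring

lemma contDiff_frobInner (hA : SmoothMat A) (hB : SmoothMat B) :
    ContDiff ℝ (⊤ : ℕ∞) (fun x => frobInner (A x) (B x)) :=
  ContDiff.sum fun a _ => ContDiff.sum fun b _ => (hA a b).mul (hB a b)

lemma pd_frobInner (hmc : MetricCompat Γ) (hA : SmoothMat A) (hB : SmoothMat B) (i : Fin n)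
    (x : Fin n → ℝ) :
    pd i (fun y => frobInner (A y) (B y)) x
      = frobInner (covDer Γ i A x) (B x) + frobInner (A x) (covDer Γ i B x) := by
  have h1 : pd i (fun y => frobInner (A y) (B y)) x
      = frobInner (pder i A x) (B x) + frobInner (A x) (pder i B x) := by
    simp only [pd, frobInner, pder, Matrix.of_apply, ← Finset.sum_add_distrib]
    rw [fderiv_fun_sum (fun a _ => DifferentiableAt.fun_sum fun b _ =>
      (hA.diff a b x).fun_mul (hB.diff a b x))]
    simp only [_root_.sum_apply]
    refine Finset.sum_congr rfl fun a _ => ?_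
    rw [fderiv_fun_sum (fun b _ => (hA.diff a b x).fun_mul (hB.diff a b x))]
    simp only [_root_.sum_apply]
    refine Finset.sum_congr rfl fun b _ => ?_
    rw [fderiv_fun_mul (hA.diff a b x) (hB.diff a b x)]
    simp; ring
  have h2 := frobInner_comm_skew (X := A x) (Y := B x) (skew_apply (hmc x i))
  have hl : ∀ X Y Z : Matrix (Fin m) (Fin m) ℝ,
      frobInner (X + Y) Z = frobInner X Z + frobInner Y Z := by
    intro X Y Z
    simp only [frobInner, Matrix.add_apply, add_mul, Finset.sum_add_distrib]
  have hr : ∀ X Y Z : Matrix (Fin m) (Fin m) ℝ,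
      frobInner Z (X + Y) = frobInner Z X + frobInner Z Y := by
    intro X Y Z
    simp only [frobInner, Matrix.add_apply, mul_add, Finset.sum_add_distrib]
  rw [h1]
  simp only [covDer, hl, hr]
  linarith

lemma frobInner_symm (X Y : Matrix (Fin m) (Fin m) ℝ) : frobInner X Y = frobInner Y X := by
  simp only [frobInner, mul_comm]

/-- `frobInner` against a fixed matrix, as a linear map. -/
def frobLin (Y : Matrix (Fin m) (Fin m) ℝ) : Matrix (Fin m) (Fin m) ℝ →ₗ[ℝ] ℝ where
  toFun X := frobInner X Y
  map_add' X Z := by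
    simp only [frobInner, Matrix.add_apply, add_mul, Finset.sum_add_distrib]
  map_smul' c X := by
    simp only [frobInner, Matrix.smul_apply, smul_eq_mul, Finset.mul_sum, mul_assoc,
      RingHom.id_apply]

lemma frobLin_apply (X Y : Matrix (Fin m) (Fin m) ℝ) : frobLin Y X = frobInner X Y := rfl

lemma normSqF_eq (x : Fin n → ℝ) :
    normSqF Γ x = ∑ j, ∑ k, frobInner (curv Γ j k x) (curv Γ j k x) := by
  simp only [normSqF, frobInner_self]

lemma normSqF_nonneg (x : Fin n → ℝ) : 0 ≤ normSqF Γ x :=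
  Finset.sum_nonneg fun _ _ => Finset.sum_nonneg fun _ _ => frobSq_nonneg _

lemma pd_sum2 {g : Fin n → Fin n → (Fin n → ℝ) → ℝ} (hg : ∀ j k, ContDiff ℝ (⊤ : ℕ∞) (g j k))
    (i : Fin n) (x : Fin n → ℝ) :
    pd i (fun y => ∑ j, ∑ k, g j k y) x = ∑ j, ∑ k, pd i (g j k) x := by
  have hd : ∀ j k, DifferentiableAt ℝ (g j k) x := fun j k => (hg j k).differentiable (by simp) x
  unfold pd
  rw [fderiv_fun_sum (fun j _ => DifferentiableAt.fun_sum fun k _ => hd j k)]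
  simp only [_root_.sum_apply]
  refine Finset.sum_congr rfl fun j _ => ?_
  rw [fderiv_fun_sum (fun k _ => hd j k)]
  simp only [_root_.sum_apply]

/-- The cubic term is controlled by `|F|³`. -/
lemma cubic_bound (hmc : MetricCompat Γ) (x : Fin n → ℝ) :
    - (normF Γ x) ^ 3 ≤ ∑ j, ∑ k, ∑ i,
      frobInner (comm (curv Γ i j x) (curv Γ i k x)) (curv Γ j k x) := by
  set N : Fin n → Fin n → ℝ := fun i j => frobNorm (curv Γ i j x) with hN
  have h1 := triple_sum_le N
  have h2 : Real.sqrt (∑ i, ∑ j, N i j ^ 2) = normF Γ x := by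
    simp only [hN, frobNorm_sq, normF, normSqF]
  rw [h2] at h1
  have h3 := (abs_le.1 h1).2
  have h4 : ∑ j, ∑ k, ∑ i, -(N i j * N i k * N j k) ≤ ∑ j, ∑ k, ∑ i,
      frobInner (comm (curv Γ i j x) (curv Γ i k x)) (curv Γ j k x) :=
    Finset.sum_le_sum fun j _ => Finset.sum_le_sum fun k _ => Finset.sum_le_sum fun i _ =>
      (abs_le.1 (abs_frobInner_comm_le _ _ _ (curv_skew hmc i j x) (curv_skew hmc i k x))).1
  simp only [Finset.sum_neg_distrib, ← Finset.sum_mul] at h4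
  linarith

lemma drift_ineq (hΓ : Smooth Γ) (hmc : MetricCompat Γ) (hs : IsSoliton Γ)
    (hbd : ∀ x : Fin n → ℝ, normF Γ x ≤ 3 / 8) (x : Fin n → ℝ) :
    (1 / 2) * normSqF Γ x ≤ ∑ i, pd i (fun y => pd i (normSqF Γ) y) x
      - (1 / 2) * ∑ i, x i * pd i (normSqF Γ) x := by
  have hF := smooth_curv hΓ
  have hDF : ∀ i j k : Fin n, SmoothMat (fun y => covDer Γ i (fun z => curv Γ j k z) y) :=
    fun i j k => SmoothMat.covDer hΓ (hF j k) i
  have e0 : normSqF Γ = fun y => ∑ j, ∑ k, frobInner (curv Γ j k y) (curv Γ j k y) :=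
    funext normSqF_eq
  have e1 : ∀ i y, pd i (normSqF Γ) y
      = ∑ j, ∑ k, 2 * frobInner (covDer Γ i (fun z => curv Γ j k z) y) (curv Γ j k y) := by
    intro i y
    rw [e0, pd_sum2 (fun j k => contDiff_frobInner (hF j k) (hF j k))]
    refine Finset.sum_congr rfl fun j _ => Finset.sum_congr rfl fun k _ => ?_
    rw [pd_frobInner hmc (hF j k) (hF j k), frobInner_symm (curv Γ j k y)]; ring
  have e2 : ∀ i, pd i (fun y => pd i (normSqF Γ) y) x
      = ∑ j, ∑ k, 2 * (frobInner (covDer Γ i (fun y => covDer Γ i (fun z => curv Γ j k z) y) x)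
          (curv Γ j k x) + frobSq (covDer Γ i (fun z => curv Γ j k z) x)) := by
    intro i
    rw [funext (e1 i), pd_sum2 (fun j k => contDiff_const.mul
      (contDiff_frobInner (hDF i j k) (hF j k)))]
    refine Finset.sum_congr rfl fun j _ => Finset.sum_congr rfl fun k _ => ?_
    rw [← frobInner_self, ← pd_frobInner hmc (hDF i j k) (hF j k)]
    unfold pd
    rw [fderiv_const_mul ((contDiff_frobInner (hDF i j k) (hF j k)).differentiable (by simp) x)]
    simp
  have e3 : ∑ i, pd i (fun y => pd i (normSqF Γ) y) x - (1 / 2) * ∑ i, x i * pd i (normSqF Γ) x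
      = ∑ j, ∑ k, (2 * (frobInner (curv Γ j k x) (curv Γ j k x)
          + 2 * ∑ i, frobInner (comm (curv Γ i j x) (curv Γ i k x)) (curv Γ j k x))
        + ∑ i, 2 * frobSq (covDer Γ i (fun z => curv Γ j k z) x)) := by
    have hperm : ∀ g : Fin n → Fin n → Fin n → ℝ,
        ∑ i, ∑ j, ∑ k, g i j k = ∑ j, ∑ k, ∑ i, g i j k := by
      intro g
      rw [Finset.sum_comm]
      exact Finset.sum_congr rfl fun _ _ => Finset.sum_comm
    have h5 : ∑ i, x i * pd i (normSqF Γ) x = ∑ j, ∑ k, ∑ i,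
        x i * (2 * frobInner (covDer Γ i (fun z => curv Γ j k z) x) (curv Γ j k x)) := by
      rw [← hperm]
      refine Finset.sum_congr rfl fun i _ => ?_
      rw [e1]
      simp only [Finset.mul_sum]
    rw [Finset.sum_congr rfl fun i _ => e2 i, hperm, h5, Finset.mul_sum, ← Finset.sum_sub_distrib]
    refine Finset.sum_congr rfl fun j _ => ?_
    rw [Finset.mul_sum, ← Finset.sum_sub_distrib]
    refine Finset.sum_congr rfl fun k _ => ?_
    have hl := congrArg (frobLin (curv Γ j k x)) (laplace_curv hΓ hs j k x)
    simp only [map_add, map_sum, map_smul, smul_eq_mul] at hl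
    simp only [frobLin_apply] at hl
    simp only [mul_add, Finset.sum_add_distrib, ← Finset.mul_sum]
    rw [hl]
    have : ∑ i, x i * (2 * frobInner (covDer Γ i (fun z => curv Γ j k z) x) (curv Γ j k x))
        = 2 * ∑ i, x i * frobInner (covDer Γ i (fun z => curv Γ j k z) x) (curv Γ j k x) := by
      rw [Finset.mul_sum]; exact Finset.sum_congr rfl fun i _ => by ring
    rw [this]
    ring
  have e4 : 2 * (normSqF Γ x + 2 * ∑ j, ∑ k, ∑ i,
      frobInner (comm (curv Γ i j x) (curv Γ i k x)) (curv Γ j k x))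
      ≤ ∑ j, ∑ k, (2 * (frobInner (curv Γ j k x) (curv Γ j k x)
          + 2 * ∑ i, frobInner (comm (curv Γ i j x) (curv Γ i k x)) (curv Γ j k x))
        + ∑ i, 2 * frobSq (covDer Γ i (fun z => curv Γ j k z) x)) := by
    rw [normSqF_eq]
    simp only [Finset.mul_sum (s := (Finset.univ : Finset (Fin n))), ← Finset.sum_add_distrib]
    refine Finset.sum_le_sum fun j _ => Finset.sum_le_sum fun k _ => ?_
    have : 0 ≤ ∑ i, 2 * frobSq (covDer Γ i (fun z => curv Γ j k z) x) :=
      Finset.sum_nonneg fun i _ => mul_nonneg (by norm_num) (frobSq_nonneg _)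
    linarith
  rw [e3]
  refine le_trans ?_ e4
  have h1 := cubic_bound hmc x
  have h2 : normSqF Γ x = normF Γ x ^ 2 := (Real.sq_sqrt (normSqF_nonneg x)).symm
  have h3 : normF Γ x ^ 3 ≤ 3 / 8 * normF Γ x ^ 2 := by
    have := mul_le_mul_of_nonneg_right (hbd x) (sq_nonneg (normF Γ x))
    linarith [show normF Γ x ^ 3 = normF Γ x * normF Γ x ^ 2 by ring]
  rw [h2]
  linarith

end final

end YM

/-- **Gap theorem** (Theorem 1.2): a metric-compatible `(0,1)`-soliton on
`ℝⁿ × ℝᵐ` with `|F| ≤ 3/8` everywhere is flat. -/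
theorem gap_theorem (n m : ℕ) (hn : 1 ≤ n) (hm : 1 ≤ m)
    (Γ : YM.Conn n m) (hsm : YM.Smooth Γ) (hmc : YM.MetricCompat Γ)
    (hsol : YM.IsSoliton Γ)
    (hbd : ∀ x : Fin n → ℝ, YM.normF Γ x ≤ 3 / 8) :
    ∀ (i j : Fin n) (x : Fin n → ℝ), YM.curv Γ i j x = 0 := by
  have hF := YM.smooth_curv hsm
  have hcd : ContDiff ℝ (⊤ : ℕ∞) (YM.normSqF Γ) := by
    rw [show YM.normSqF Γ = fun y => ∑ j, ∑ k, YM.frobInner (YM.curv Γ j k y) (YM.curv Γ j k y)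
      from funext YM.normSqF_eq]
    exact ContDiff.sum fun j _ => ContDiff.sum fun k _ =>
      YM.contDiff_frobInner (hF j k) (hF j k)
  have hle : ∀ x, YM.normSqF Γ x ≤ (3 / 8) ^ 2 := fun x => by
    rw [← Real.sq_sqrt (YM.normSqF_nonneg x)]
    exact pow_le_pow_left₀ (Real.sqrt_nonneg _) (hbd x) 2
  intro i j x
  have h0 := YM.max_principle hcd (by norm_num : (0:ℝ) < 1 / 2) hle
    (YM.drift_ineq hsm hmc hsol hbd) x
  apply YM.frobSq_eq_zero
  refine le_antisymm (le_trans ?_ h0) (YM.frobSq_nonneg _)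
  calc YM.frobSq (YM.curv Γ i j x) ≤ ∑ l, YM.frobSq (YM.curv Γ i l x) :=
        Finset.single_le_sum (f := fun l => YM.frobSq (YM.curv Γ i l x))
          (fun _ _ => YM.frobSq_nonneg _) (Finset.mem_univ j)
    _ ≤ _ := Finset.single_le_sum (f := fun p => ∑ l, YM.frobSq (YM.curv Γ p l x))
          (fun _ _ => Finset.sum_nonneg fun _ _ => YM.frobSq_nonneg _) (Finset.mem_univ i)
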